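/- Let E be a type and Φ : E → ℝ → E a map with the semigroup (flow) properties Φ(x, 0) = x for all x, and Φ(Φ(x, s), t) = Φ(x, s + t) for all x and all s, t ≥ 0. Let h, h_B : E → ℝ, set S = { x | h(x) ≥ 0 } and S_B = { x | h_B(x) ≥ 0 }, and assume S_B ⊆ S and that S_B is forward invariant under Φ (for all x ∈ S_B and t ≥ 0, Φ(x, t) ∈ S_B). Fix T > 0 and define the implicit safe set S_I = { x ∈ E | (∀ t ∈ [0, T], Φ(x, t) ∈ S) ∧ Φ(x, T) ∈ S_B }. Then S_I is forward invariant under Φ: for all x ∈ S_I and all s ≥ 0, Φ(x, s) ∈ S_I. -/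

import Mathlib

/-!
A trajectory that is in the backup set at time `T` stays there, hence in the safe set, at all later
times. So the points of the implicit safe set are exactly those that are in the backup set at time
`T` and in the safe set at every nonnegative time. Each of these two conditions is preserved
by the flow: the first because times commute, the second because it passes to tails of trajectories.
-/

section ForwardInvariance

open Set

variable {τ α : Type*}

/-- The composition law of a flow `φ`, imposed at nonnegative times only. -/
def IsForwardSemigroup [Add τ] [Zero τ] [LE τ] (φ : τ → α → α) : Prop :=
  ∀ (x : α) (s t : τ), 0 ≤ s → 0 ≤ t → φ t (φ s x) = φ (s + t) x

/-- The points whose trajectory under `φ` is in `S` at every nonnegative time; for a flow this is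
the largest forward invariant subset of `S`. -/
def forwardKernel [Zero τ] [LE τ] (φ : τ → α → α) (S : Set α) : Set α :=
  {x | ∀ t, 0 ≤ t → φ t x ∈ S}

/-- The implicit safe set `S_I` of the safe set `S` and the backup set `B` with horizon `T`, where
`φ` is the closed-loop flow under the backup controller. -/
def implicitSafeSet [Zero τ] [Preorder τ] (φ : τ → α → α) (S B : Set α) (T : τ) : Set α :=
  {x | (∀ t ∈ Icc 0 T, φ t x ∈ S) ∧ φ T x ∈ B}

variable {φ : τ → α → α} {S B : Set α} {T : τ}

theorem isForwardInvariant_forwardKernel [AddMonoid τ] [Preorder τ] [AddLeftMono τ]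
    (hφ : IsForwardSemigroup φ) : IsForwardInvariant φ (forwardKernel φ S) := by
  intro s hs x hx t ht
  rw [hφ x s t hs ht]
  exact hx (s + t) (add_nonneg hs ht)

theorem isForwardInvariant_preimage [AddCommMonoid τ] [Preorder τ]
    (hφ : IsForwardSemigroup φ) (hB : IsForwardInvariant φ B) (hT : 0 ≤ T) :
    IsForwardInvariant φ (φ T ⁻¹' B) := by
  intro s hs x hx
  have times_commute : φ T (φ s x) = φ s (φ T x) := by
    rw [hφ x s T hs hT, hφ x T s hT hs, add_comm]
  rw [mem_preimage, times_commute]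
  exact hB hs hx

theorem IsForwardSemigroup.mem_of_le [AddMonoid τ] [Preorder τ] [ExistsAddOfLE τ]
    [AddLeftReflectLE τ] (hφ : IsForwardSemigroup φ) (hB : IsForwardInvariant φ B) (hT : 0 ≤ T)
    {x : α} (hx : φ T x ∈ B) {t : τ} (hTt : T ≤ t) : φ t x ∈ B := by
  obtain ⟨u, rfl⟩ := exists_add_of_le hTt
  have hu : 0 ≤ u := nonneg_of_le_add_right hTt
  rw [← hφ x T u hT hu]
  exact hB hu hx

theorem implicitSafeSet_eq_forwardKernel_inter_preimage [AddMonoid τ] [LinearOrder τ]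
    [ExistsAddOfLE τ] [AddLeftReflectLE τ] (hφ : IsForwardSemigroup φ) (hBS : B ⊆ S)
    (hB : IsForwardInvariant φ B) (hT : 0 ≤ T) :
    implicitSafeSet φ S B T = forwardKernel φ S ∩ φ T ⁻¹' B := by
  ext x
  refine and_congr_left fun hxT ↦ ⟨fun hx t ht ↦ ?_, fun hx t ht ↦ hx t ht.1⟩
  rcases le_total t T with htT | hTt
  · exact hx t ⟨ht, htT⟩
  · exact hBS (hφ.mem_of_le hB hT hxT hTt)

theorem implicit_safe_set_forward_invariant_general [AddCommMonoid τ] [LinearOrder τ]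
    [IsOrderedCancelAddMonoid τ] [ExistsAddOfLE τ] (hφ : IsForwardSemigroup φ) (hBS : B ⊆ S)
    (hB : IsForwardInvariant φ B) (hT : 0 ≤ T) :
    IsForwardInvariant φ (implicitSafeSet φ S B T) := by
  rw [implicitSafeSet_eq_forwardKernel_inter_preimage hφ hBS hB hT]
  exact fun s hs ↦ (isForwardInvariant_forwardKernel hφ hs).inter_inter
    (isForwardInvariant_preimage hφ hB hT hs)

end ForwardInvariance

/-- The implicit safe set `S_I` of a backup controller is forward invariant
under the closed-loop flow, provided the backup set is forward invariant and contained
in the nominal safe set. -/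
theorem implicit_safe_set_forward_invariant
    {E : Type*} (Φ : E → ℝ → E)
    (hΦ0 : ∀ x : E, Φ x 0 = x)
    (hΦadd : ∀ (x : E) (s t : ℝ), 0 ≤ s → 0 ≤ t → Φ (Φ x s) t = Φ x (s + t))
    (h hB : E → ℝ)
    (hSB_sub : { x : E | 0 ≤ hB x } ⊆ { x : E | 0 ≤ h x })
    (hSB_inv : ∀ x ∈ { x : E | 0 ≤ hB x }, ∀ t : ℝ, 0 ≤ t → Φ x t ∈ { x : E | 0 ≤ hB x })
    (T : ℝ) (hT : 0 < T) :
    ∀ x ∈ { x : E | (∀ t ∈ Set.Icc (0 : ℝ) T, Φ x t ∈ { y : E | 0 ≤ h y }) ∧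
        Φ x T ∈ { y : E | 0 ≤ hB y } },
      ∀ s : ℝ, 0 ≤ s →
        Φ x s ∈ { x : E | (∀ t ∈ Set.Icc (0 : ℝ) T, Φ x t ∈ { y : E | 0 ≤ h y }) ∧
          Φ x T ∈ { y : E | 0 ≤ hB y } } := by
  intro x hx s hs
  exact implicit_safe_set_forward_invariant_general (φ := fun t x ↦ Φ x t) hΦadd hSB_sub
    (fun t ht x hx ↦ hSB_inv x hx t ht) hT.le hs hx
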